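/- arXiv:math/0105084 — 10 statements merged into one kernel-verified Lean document; each statement's English description precedes it below -/
import Mathlib

section
/- Let F be a field, a, b ∈ F with a ≠ 0, b ≠ 0 and ab − b + 1 ≠ 0. Let x ∈ F with B(x) ≠ 0. Then the map ρ given by ρ(x) = −A(x)/B(x) is an involution: ρ(ρ(x)) = x (note that B(ρ(x)) = −μ/B(x) ≠ 0, so ρ(ρ(x)) is defined). -/
/-- A(x) = (a·x − a + 1)/a -/
def Af {F : Type*} [Field F] (a x : F) : F := (a * x - a + 1) / a

/-- B(x) = b·x − x + 1 -/
def Bf {F : Type*} [Field F] (b x : F) : F := b * x - x + 1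

/-- μ = −(a·b − b + 1)/a -/
def muf {F : Type*} [Field F] (a b : F) : F := -(a * b - b + 1) / a

/-- k(x) = B(x)/(a·b·x·A(x)) -/
def kf {F : Type*} [Field F] (a b x : F) : F := Bf b x / (a * b * x * Af a x)

/-- ρ(x) = −A(x)/B(x) -/
def rhof {F : Type*} [Field F] (a b x : F) : F := -(Af a x) / Bf b x

/-- σ(x) = −x/B(x) -/
def sigf {F : Type*} [Field F] (b x : F) : F := -x / Bf b x

/-- ρ given by ρ(x) = −A(x)/B(x) is an involution: ρ(ρ(x)) = x. -/
theorem stmt_0 {F : Type*} [Field F] (a b : F) (ha : a ≠ 0) (hb : b ≠ 0)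
    (hab : a * b - b + 1 ≠ 0) (x : F) (hBx : Bf b x ≠ 0) :
    rhof a b (rhof a b x) = x := by
  have h1 : Bf b (rhof a b x) = (a * b - b + 1) / (a * Bf b x) := by
    rw [eq_div_iff (mul_ne_zero ha hBx)]
    unfold rhof
    have h : -(Af a x) / Bf b x * Bf b x = -(Af a x) := div_mul_cancel₀ _ hBx
    have h2 : Af a x * a = a * x - a + 1 := div_mul_cancel₀ _ ha
    have h3 : Bf b x = b * x - x + 1 := rfl
    have h4 : Bf b (-(Af a x) / Bf b x)
      = b * (-(Af a x) / Bf b x) - (-(Af a x) / Bf b x) + 1 := rfl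
    rw [h4]
    linear_combination a * (b - 1) * h - (b - 1) * h2 + a * h3
  have h5 : Af a (rhof a b x) = -x * (a * b - b + 1) / (a * Bf b x) := by
    rw [eq_div_iff (mul_ne_zero ha hBx)]
    have h : rhof a b x * Bf b x = -(Af a x) := div_mul_cancel₀ _ hBx
    have h2 : Af a x * a = a * x - a + 1 := div_mul_cancel₀ _ ha
    have h3 : Bf b x = b * x - x + 1 := rfl
    have h6 : Af a (rhof a b x) * a = a * rhof a b x - a + 1 := div_mul_cancel₀ _ ha
    linear_combination Bf b x * h6 + a * h - h2 + (1 - a) * h3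
  have h7 : rhof a b (rhof a b x) = -(Af a (rhof a b x)) / Bf b (rhof a b x) := rfl
  rw [h7, h1, h5]
  generalize a * b - b + 1 = c at hab ⊢
  field_simp
end

section
/- Let F be a field, a, b ∈ F with a ≠ 0, b ≠ 0 and ab − b + 1 ≠ 0. Let x ∈ F with x ≠ 0, A(x) ≠ 0 and B(x) ≠ 0. Then k is invariant under the involution ρ: k(−A(x)/B(x)) = k(x), where k(x) = B(x)/(a·b·x·A(x)). -/
/-- k is invariant under the involution ρ: k(−A(x)/B(x)) = k(x). -/
theorem stmt_1 {F : Type*} [Field F] (a b : F) (ha : a ≠ 0) (hb : b ≠ 0)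
    (hab : a * b - b + 1 ≠ 0) (x : F) (hx : x ≠ 0) (hAx : Af a x ≠ 0) (hBx : Bf b x ≠ 0) :
    kf a b (-(Af a x) / Bf b x) = kf a b x := by
  have hA : Af a (-(Af a x) / Bf b x) = muf a b * x / Bf b x := by
    rw [Af, muf, div_eq_div_iff ha hBx]
    have h : Af a x * a = a * x - a + 1 := by rw [Af, div_mul_cancel₀ _ ha]
    field_simp
    simp only [Bf]
    linear_combination (-1 : F) * h
  have hB : Bf b (-(Af a x) / Bf b x) = -muf a b / Bf b x := by
    have h : Bf b x - (b - 1) * Af a x = -muf a b := by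
      simp only [Bf, Af, muf]
      field_simp
      ring
    rw [← h, Bf]
    field_simp
    ring
  have hm : muf a b ≠ 0 := div_ne_zero (neg_ne_zero.mpr hab) ha
  rw [kf, hA, hB, kf]
  field_simp
end

section
/- Let F be a field, a, b ∈ F with a ≠ 0, and let x ∈ F with A(x) ≠ 0 and B(x) ≠ 0. Then the function A(x)/x transforms under the involution ρ(x) = −A(x)/B(x) into −μx/A(x); that is, A(ρ(x))/ρ(x) = −μ·x/A(x). -/
/-- A(ρ(x))/ρ(x) = −μ·x/A(x). -/
theorem stmt_5 {F : Type*} [Field F] (a b : F) (ha : a ≠ 0) (x : F)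
    (hAx : Af a x ≠ 0) (hBx : Bf b x ≠ 0) :
    Af a (rhof a b x) / rhof a b x = -(muf a b) * x / Af a x := by
  have h1 : Af a (rhof a b x) = muf a b * x / Bf b x := by
    rw [eq_div_iff hBx]
    have hr : rhof a b x * Bf b x = -(Af a x) := by
      unfold rhof
      exact div_mul_cancel₀ _ hBx
    have h2 : ∀ y : F, Af a y * Bf b x = y * Bf b x + (1 - a) / a * Bf b x := by
      intro y
      unfold Af
      field_simp
      ring
    rw [h2, hr]
    unfold Af Bf muf
    field_simp
    ring
  rw [h1]
  unfold rhof
  rw [div_div_div_cancel_right₀ hBx, div_neg, neg_mul, neg_div]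
end

section
/- Let F be a field, a, b ∈ F with a ≠ 0, b ≠ 0 and ab − b + 1 ≠ 0, and let x, y ∈ F with B(x) ≠ 0 and A(y) ≠ 0. Then the two-variable function 1 − μx/(A(y)B(x)) transforms under the involution ρ applied to the x-variable into (y−x)/A(y); that is, 1 − μ·ρ(x)/(A(y)·B(ρ(x))) = (y − x)/A(y), where ρ(x) = −A(x)/B(x). -/
/-- 1 − μ·ρ(x)/(A(y)·B(ρ(x))) = (y − x)/A(y). -/
theorem stmt_6 {F : Type*} [Field F] (a b : F) (ha : a ≠ 0) (hb : b ≠ 0)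
    (hab : a * b - b + 1 ≠ 0) (x y : F) (hBx : Bf b x ≠ 0) (hAy : Af a y ≠ 0) :
    1 - muf a b * rhof a b x / (Af a y * Bf b (rhof a b x)) = (y - x) / Af a y := by
  have h1 : Bf b (rhof a b x) = -muf a b / Bf b x := by
    rw [eq_div_iff hBx]
    have h : rhof a b x * Bf b x = -(Af a x) := by
      unfold rhof
      exact div_mul_cancel₀ _ hBx
    have h2 : Bf b (rhof a b x) * Bf b x = (b - 1) * (rhof a b x * Bf b x) + Bf b x := by
      simp only [Bf]
      ring
    rw [h2, h]
    simp only [Af, Bf, muf]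
    field_simp
    ring
  have hmu : muf a b ≠ 0 := div_ne_zero (neg_ne_zero.mpr hab) ha
  have h3 : Af a y - Af a x = y - x := by
    simp only [Af]
    field_simp
    ring
  rw [h1, ← h3, rhof]
  generalize Af a y = p at *
  generalize Af a x = q at *
  generalize Bf b x = r at *
  generalize muf a b = m at *
  field_simp
  try ring
end

section
/- Let F be a field, a, b ∈ F with a ≠ 0, and let x, y ∈ F with B(x) ≠ 0, B(y) ≠ 0 and A(y) ≠ 0. Then the function 1 − x/y transforms under the simultaneous involution ρ in both variables into μ(x−y)/(A(y)B(x)); that is, 1 − ρ(x)/ρ(y) = μ·(x − y)/(A(y)·B(x)), where ρ(x) = −A(x)/B(x). In particular A(y)·B(x) − A(x)·B(y) = μ·(x − y). -/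
/-- 1 − ρ(x)/ρ(y) = μ·(x − y)/(A(y)·B(x)); in particular
    A(y)·B(x) − A(x)·B(y) = μ·(x − y). -/
theorem stmt_7 {F : Type*} [Field F] (a b : F) (ha : a ≠ 0) (x y : F)
    (hBx : Bf b x ≠ 0) (hBy : Bf b y ≠ 0) (hAy : Af a y ≠ 0) :
    1 - rhof a b x / rhof a b y = muf a b * (x - y) / (Af a y * Bf b x) ∧
    Af a y * Bf b x - Af a x * Bf b y = muf a b * (x - y) := by
  have h : Af a y * Bf b x - Af a x * Bf b y = muf a b * (x - y) := by
    unfold Af Bf muf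
    field_simp
    ring
  refine ⟨?_, h⟩
  rw [← h]
  unfold rhof
  field_simp
end

section
/- Let F be a field, a, b ∈ F with a ≠ 0, b ≠ 0 and ab − b + 1 ≠ 0, and let x, y ∈ F with B(x) ≠ 0, B(y) ≠ 0 and A(y) ≠ 0. Then the function (y−x)/(y·B(x)) transforms under the simultaneous involution ρ in both variables into (y−x)/A(y); that is, (ρ(y) − ρ(x))/(ρ(y)·B(ρ(x))) = (y − x)/A(y), where ρ(x) = −A(x)/B(x). -/
/-- (ρ(y) − ρ(x))/(ρ(y)·B(ρ(x))) = (y − x)/A(y). -/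
theorem stmt_8 {F : Type*} [Field F] (a b : F) (ha : a ≠ 0) (hb : b ≠ 0)
    (hab : a * b - b + 1 ≠ 0) (x y : F) (hBx : Bf b x ≠ 0) (hBy : Bf b y ≠ 0)
    (hAy : Af a y ≠ 0) :
    (rhof a b y - rhof a b x) / (rhof a b y * Bf b (rhof a b x)) = (y - x) / Af a y := by
  have h1 : Bf b (rhof a b x) = ((a * b - b + 1) / a) / Bf b x := by
    rw [eq_div_iff hBx]
    have h : Bf b (rhof a b x) * Bf b x = -(b - 1) * Af a x + Bf b x := by
      unfold rhof
      rw [show Bf b (-(Af a x) / Bf b x) = (b - 1) * (-(Af a x) / Bf b x) + 1 by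
        unfold Bf; ring]
      field_simp
    rw [h]
    unfold Af Bf
    field_simp
    ring
  have h2 : rhof a b y - rhof a b x
      = (x - y) * ((a * b - b + 1) / a) / (Bf b x * Bf b y) := by
    have h : Af a x * Bf b y - Af a y * Bf b x = (x - y) * ((a * b - b + 1) / a) := by
      unfold Af Bf
      field_simp
      ring
    rw [← h]
    unfold rhof
    field_simp
    ring
  rw [h1, h2]
  have hm : (a * b - b + 1) / a ≠ 0 := div_ne_zero hab ha
  generalize (a * b - b + 1) / a = m at hm
  unfold rhof
  field_simp
  ring
end

section
/- Let F be a field, a, b, c ∈ F with a ≠ 0 and b ≠ 0, let c ≠ 0, A(c) ≠ 0, B(c) ≠ 0, and let y ∈ F with y ≠ 0, A(y) ≠ 0 and B(y) ≠ 0. Then k(y) = k(c) if and only if y = c or y = −A(c)/B(c); i.e., the only solutions of 1 − k(c)/k(y) = 0 are y₁ = c and y₂ = −(ac − a + 1)/(a(bc − c + 1)). -/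
/-- k(y) = k(c) iff y = c or y = −A(c)/B(c); i.e., the only solutions
    of 1 − k(c)/k(y) = 0 are y₁ = c and y₂ = −(ac − a + 1)/(a(bc − c + 1)). -/
theorem stmt_11 {F : Type*} [Field F] (a b c : F) (ha : a ≠ 0) (hb : b ≠ 0)
    (hc : c ≠ 0) (hAc : Af a c ≠ 0) (hBc : Bf b c ≠ 0) (y : F)
    (hy : y ≠ 0) (hAy : Af a y ≠ 0) (hBy : Bf b y ≠ 0) :
    kf a b y = kf a b c ↔ y = c ∨ y = -(a * c - a + 1) / (a * (b * c - c + 1)) := by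
  have e : ∀ x : F, kf a b x = Bf b x / (b * x * (a * x - a + 1)) := by
    intro x
    unfold kf Af
    congr 1
    field_simp
  have nA : ∀ x : F, Af a x ≠ 0 → a * x - a + 1 ≠ 0 := by
    intro x h h0
    exact h (by simp [Af, h0])
  have h1 := nA c hAc
  have h2 := nA y hAy
  have h3 : b * c - c + 1 ≠ 0 := hBc
  rw [e, e,
    div_eq_div_iff (mul_ne_zero (mul_ne_zero hb hy) h2) (mul_ne_zero (mul_ne_zero hb hc) h1),
    eq_div_iff (mul_ne_zero ha h3)]
  unfold Bf
  constructor
  · intro h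
    have h4 : b * ((y - c) * (y * (a * (b * c - c + 1)) + (a * c - a + 1))) = 0 := by
      linear_combination -h
    rcases mul_eq_zero.mp ((mul_eq_zero.mp h4).resolve_left hb) with h5 | h5
    · exact Or.inl (sub_eq_zero.mp h5)
    · exact Or.inr (eq_neg_of_add_eq_zero_left h5)
  · rintro (h | h)
    · rw [h]
    · linear_combination -(b * (y - c)) * h
end

section
/- Let F be a field, a, b, c ∈ F with a ≠ 0, b ≠ 0, c ≠ 0, A(c) ≠ 0, B(c) ≠ 0, and let y ∈ F with y ≠ 0, A(y) ≠ 0 and B(y) ≠ 0. Set y₂ = −A(c)/B(c), l₁(y) = 1 − y/c and l₂(y) = (y₂ − y)/(y₂·B(y)). Then the function l(y) = 1 − k(c)/k(y) factors as l(y) = l₁(y)·l₂(y), where k(x) = B(x)/(a·b·x·A(x)). Moreover l₁(0) = l₂(0) = 1. -/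
/-- with y₂ = −A(c)/B(c), l₁(y) = 1 − y/c, l₂(y) = (y₂ − y)/(y₂·B(y)),
    the function l(y) = 1 − k(c)/k(y) factors as l(y) = l₁(y)·l₂(y);
    moreover l₁(0) = l₂(0) = 1. -/
theorem stmt_13 {F : Type*} [Field F] (a b c : F) (ha : a ≠ 0) (hb : b ≠ 0)
    (hc : c ≠ 0) (hAc : Af a c ≠ 0) (hBc : Bf b c ≠ 0) (y : F)
    (hy : y ≠ 0) (hAy : Af a y ≠ 0) (hBy : Bf b y ≠ 0) :
    1 - kf a b c / kf a b y =
      (1 - y / c) * ((-(Af a c) / Bf b c - y) / (-(Af a c) / Bf b c * Bf b y)) ∧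
    1 - (0 : F) / c = 1 ∧
    (-(Af a c) / Bf b c - 0) / (-(Af a c) / Bf b c * Bf b 0) = 1 := by
  have key : c * Af a c * Bf b y - y * Af a y * Bf b c
      = (c - y) * (Af a c + y * Bf b c) := by
    unfold Af Bf
    field_simp
    ring
  have h0 : Bf b 0 = 1 := by simp [Bf]
  refine ⟨?_, by simp, ?_⟩
  · have h1 : 1 - kf a b c / kf a b y
        = (c * Af a c * Bf b y - y * Af a y * Bf b c) / (c * Af a c * Bf b y) := by
      unfold kf
      generalize Af a c = p at *
      generalize Af a y = q at *
      generalize Bf b c = r at *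
      generalize Bf b y = s at *
      field_simp
    rw [h1, key]
    generalize Af a c = p at *
    generalize Bf b c = r at *
    generalize Bf b y = s at *
    field_simp
    ring
  · rw [h0, sub_zero, mul_one]
    exact div_self (div_ne_zero (neg_ne_zero.mpr hAc) hBc)
end

section
/- Let F be a field and a, b ∈ F with a ≠ 0, b ≠ 0, a ≠ 1 and ab − b + 1 ≠ 0, and set a′ = (ab − b + 1)/(b(a − 1)), A′(t) = (a′·t − a′ + 1)/a′, σ(x) = −x/B(x). Then for all x ∈ F with B(x) ≠ 0 and abx + 1 ≠ 0, one has (a′·b·σ(x) + 1)/(a′·A′(σ(x))) = a·b·A(x)/(a·b·x + 1); that is, under the substitutions τ: a ↦ a′ and σ, the function (abx+1)/(aA(x)) becomes its reciprocal scaled by b, namely abA(x)/(abx+1). -/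
/-- with a′ = (ab − b + 1)/(b(a − 1)), A′(t) = (a′·t − a′ + 1)/a′ and
    σ(x) = −x/B(x): for all x with B(x) ≠ 0 and abx + 1 ≠ 0,
    (a′·b·σ(x) + 1)/(a′·A′(σ(x))) = a·b·A(x)/(a·b·x + 1). -/
theorem stmt_17 {F : Type*} [Field F] (a b : F) (ha : a ≠ 0) (hb : b ≠ 0)
    (ha1 : a ≠ 1) (hab : a * b - b + 1 ≠ 0) :
    ∀ x : F, Bf b x ≠ 0 → a * b * x + 1 ≠ 0 →
    ((a * b - b + 1) / (b * (a - 1)) * b * sigf b x + 1) /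
        ((a * b - b + 1) / (b * (a - 1)) * Af ((a * b - b + 1) / (b * (a - 1))) (sigf b x)) =
      a * b * Af a x / (a * b * x + 1) := by
  intro x hB hx
  have h1 : a - 1 ≠ 0 := sub_ne_zero.mpr ha1
  have hp : (a * b - b + 1) / (b * (a - 1)) ≠ 0 := div_ne_zero hab (mul_ne_zero hb h1)
  have hN : (a * b - b + 1) / (b * (a - 1)) * b * sigf b x + 1
      = -(a * x - a + 1) / ((a - 1) * Bf b x) := by
    unfold sigf
    field_simp
    unfold Bf
    ring
  have hD : (a * b - b + 1) / (b * (a - 1)) * Af ((a * b - b + 1) / (b * (a - 1))) (sigf b x)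
      = -(a * b * x + 1) / (b * (a - 1) * Bf b x) := by
    unfold Af
    rw [mul_div_cancel₀ _ hp]
    unfold sigf
    field_simp
    unfold Bf
    ring
  have hR : a * b * Af a x = b * (a * x - a + 1) := by
    unfold Af
    field_simp
  rw [hN, hD, hR, div_div_div_eq, div_eq_div_iff _ hx]
  · ring
  · exact mul_ne_zero (mul_ne_zero h1 hB) (neg_ne_zero.mpr hx)
end

section
/- Let F be a field, a, b, c ∈ F with a ≠ 0, c ≠ 0, A(c) ≠ 0 and B(c) ≠ 0, and let y ∈ F with B(y) ≠ 0. Set y₂ = ρ(c) = −A(c)/B(c), l₁(y) = 1 − y/c and l₂(y) = (y₂ − y)/(y₂·B(y)). Then l₁ transforms under the involution ρ into ε₂·l₂, where ε₂ = (ca − a + 1)/(ca); that is, l₁(ρ(y)) = ((ca − a + 1)/(ca))·l₂(y). -/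
/-- with y₂ = ρ(c) = −A(c)/B(c), l₁(y) = 1 − y/c and
    l₂(y) = (y₂ − y)/(y₂·B(y)), one has l₁(ρ(y)) = ((ca − a + 1)/(ca))·l₂(y). -/
theorem stmt_19 {F : Type*} [Field F] (a b c : F) (ha : a ≠ 0) (hc : c ≠ 0)
    (hAc : Af a c ≠ 0) (hBc : Bf b c ≠ 0) (y : F) (hBy : Bf b y ≠ 0) :
    1 - rhof a b y / c =
      ((c * a - a + 1) / (c * a)) *
        ((-(Af a c) / Bf b c - y) / (-(Af a c) / Bf b c * Bf b y)) := by
  have h1 : c * a - a + 1 = a * Af a c := by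
    unfold Af; field_simp
  have h2 : c * Bf b y + Af a y = Af a c + y * Bf b c := by
    unfold Af Bf; field_simp; ring
  have h3 : 1 - rhof a b y / c = (c * Bf b y + Af a y) / (c * Bf b y) := by
    unfold rhof; field_simp; ring
  rw [h3, h2, h1]
  generalize Af a c = A at *
  generalize Bf b c = B at *
  generalize Bf b y = D at *
  field_simp
  ring
end
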